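/- Let n ≥ 1, d ≥ 1, and let ω ↦ N_ω and ω ↦ M_ω be continuous maps from the unit sphere S^{d-1} = {ω ∈ ℝᵈ : |ω| = 1} to the space of n×n complex matrices, such that for every ω ∈ S^{d-1} the pair (N_ω, M_ω) satisfies the (SK) condition. Then for every choice of positive real numbers ε₀, …, ε_{n-1} there exists a constant c > 0 such that ∑_{k=0}^{n-1} ε_k |M_ω N_ω^{k} η|² ≥ c for every ω ∈ S^{d-1} and every η ∈ ℂⁿ with |η| = 1. -/

import Mathlib

open Matrix

/-- The Shizuta–Kawashima condition: the only vector `φ` with `M φ = 0` and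
`λ φ + N φ = 0` for some `λ ∈ ℂ` is `φ = 0`. -/
def SKCondition {m : Type*} [Fintype m] (N M : Matrix m m ℂ) : Prop :=
  ∀ (φ : m → ℂ) (l : ℂ), M.mulVec φ = 0 → l • φ + N.mulVec φ = 0 → φ = 0

/-!
The vectors `η` with `M N ^ k η = 0` for all `k` form an `N`-invariant subspace of `ker M`. Over an
algebraically closed field a nonzero invariant subspace contains an eigenvector, which the (SK)
condition forbids in `ker M`; so this subspace is zero. By Cayley–Hamilton the exponents `k < n`
already cut it out, hence the weighted sum is positive at every unit vector, and compactness turns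
positivity into a uniform lower bound.
-/

open Module

section UnobservableSubmodule

variable {R V W : Type*} [CommRing R] [AddCommGroup V] [Module R V] [AddCommGroup W] [Module R W]

/-- The unobservable subspace of the pair `(g, f)` in the sense of control theory: the vectors
whose whole orbit under `f` lies in the kernel of `g`. It is used to turn the (SK) condition, which
concerns eigenvectors, into a statement about the iterates `g ∘ f ^ k`. -/
def unobservableSubmodule (g : V →ₗ[R] W) (f : End R V) : Submodule R V :=
  ⨅ k : ℕ, LinearMap.ker (g ∘ₗ f ^ k)

theorem mem_unobservableSubmodule {g : V →ₗ[R] W} {f : End R V} {v : V} :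
    v ∈ unobservableSubmodule g f ↔ ∀ k : ℕ, g ((f ^ k) v) = 0 := by
  simp only [unobservableSubmodule, Submodule.mem_iInf, LinearMap.mem_ker, LinearMap.comp_apply]

theorem unobservableSubmodule_le_ker (g : V →ₗ[R] W) (f : End R V) :
    unobservableSubmodule g f ≤ LinearMap.ker g :=
  fun _ hv => mem_unobservableSubmodule.mp hv 0

theorem unobservableSubmodule_mem_invtSubmodule (g : V →ₗ[R] W) (f : End R V) :
    unobservableSubmodule g f ∈ End.invtSubmodule f := by
  intro v hv
  refine mem_unobservableSubmodule.mpr fun k => ?_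
  simpa only [pow_succ, End.mul_apply] using mem_unobservableSubmodule.mp hv (k + 1)

theorem mem_unobservableSubmodule_iff_forall_lt_finrank [Nontrivial R] [Module.Finite R V]
    [Module.Free R V] {g : V →ₗ[R] W} {f : End R V} {v : V} :
    v ∈ unobservableSubmodule g f ↔ ∀ k < finrank R V, g ((f ^ k) v) = 0 := by
  refine mem_unobservableSubmodule.trans ⟨fun h k _ => h k, fun h k => ?_⟩
  set r := Polynomial.X ^ k %ₘ f.charpoly with r_def
  have hdeg : r.degree < finrank R V := by
    rw [← f.charpoly_natDegree, ← Polynomial.degree_eq_natDegree f.charpoly_monic.ne_zero]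
    exact Polynomial.degree_modByMonic_lt _ f.charpoly_monic
  have hterm (i : ℕ) : g ((r.coeff i • f ^ i) v) = 0 := by
    rcases lt_or_ge i (finrank R V) with hi | hi
    · rw [LinearMap.smul_apply, map_smul, h i hi, smul_zero]
    · rw [Polynomial.coeff_eq_zero_of_degree_lt (hdeg.trans_le (Nat.cast_le.mpr hi)), zero_smul,
        LinearMap.zero_apply, map_zero]
  rw [f.pow_eq_aeval_mod_charpoly, ← r_def, Polynomial.aeval_eq_sum_range, LinearMap.sum_apply,
    map_sum]
  exact Finset.sum_eq_zero fun i _ => hterm i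

end UnobservableSubmodule

section Hautus

variable {K V W : Type*} [Field K] [IsAlgClosed K] [AddCommGroup V] [Module K V]
  [AddCommGroup W] [Module K W]

theorem exists_mem_hasEigenvector_of_mem_invtSubmodule {f : End K V} {p : Submodule K V}
    [FiniteDimensional K p] (hp : p ∈ End.invtSubmodule f) (hne : p ≠ ⊥) :
    ∃ μ : K, ∃ v ∈ p, f.HasEigenvector μ v := by
  have : Nontrivial p := Submodule.nontrivial_iff_ne_bot.mpr hne
  obtain ⟨μ, hμ⟩ := End.exists_eigenvalue (f.restrict hp)
  obtain ⟨v, hv, hv_ne⟩ := hμ.exists_hasEigenvector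
  refine ⟨μ, v, v.2, ?_, ?_⟩
  · exact End.eigenspace_restrict_le_eigenspace f hp μ (Submodule.mem_map_of_mem hv)
  · simpa only [ne_eq, Submodule.coe_eq_zero] using hv_ne

theorem unobservableSubmodule_eq_bot_iff_forall_hasEigenvector [FiniteDimensional K V]
    {g : V →ₗ[K] W} {f : End K V} :
    unobservableSubmodule g f = ⊥ ↔ ∀ μ v, f.HasEigenvector μ v → g v ≠ 0 := by
  constructor
  · intro hbot μ v hv hgv
    have hmem : v ∈ unobservableSubmodule g f := mem_unobservableSubmodule.mpr fun k => by
      rw [hv.pow_apply, map_smul, hgv, smul_zero]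
    exact hv.2 ((Submodule.eq_bot_iff _).mp hbot v hmem)
  · intro h
    by_contra hne
    obtain ⟨μ, v, hv, hμv⟩ := exists_mem_hasEigenvector_of_mem_invtSubmodule
      (unobservableSubmodule_mem_invtSubmodule g f) hne
    exact h μ v hμv (unobservableSubmodule_le_ker g f hv)

end Hautus

section SKCondition

variable {m : Type*} [Fintype m] [DecidableEq m]

theorem SKCondition.unobservableSubmodule_eq_bot {N M : Matrix m m ℂ} (h : SKCondition N M) :
    unobservableSubmodule (toLin' M) (toLin' N) = ⊥ := by
  refine unobservableSubmodule_eq_bot_iff_forall_hasEigenvector.mpr fun μ v hv hMv => ?_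
  have hNv : N *ᵥ v = μ • v := hv.apply_eq_smul
  refine hv.2 (h v (-μ) hMv ?_)
  rw [hNv, neg_smul, neg_add_cancel]

theorem SKCondition.eq_zero_of_forall_mulVec_eq_zero {N M : Matrix m m ℂ} (h : SKCondition N M)
    {η : m → ℂ} (hη : ∀ k < Fintype.card m, (M * N ^ k) *ᵥ η = 0) : η = 0 := by
  rw [← Submodule.mem_bot (R := ℂ), ← h.unobservableSubmodule_eq_bot,
    mem_unobservableSubmodule_iff_forall_lt_finrank, finrank_fintype_fun_eq_card]
  intro k hk
  rw [← toLin'_pow, toLin'_apply, toLin'_apply, mulVec_mulVec, hη k hk]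

theorem SKCondition.sum_mul_norm_sq_pos {N M : Matrix m m ℂ} (h : SKCondition N M) {ε : ℕ → ℝ}
    (hε : ∀ k < Fintype.card m, 0 < ε k) {η : m → ℂ} (hη : η ≠ 0) :
    0 < ∑ k ∈ Finset.range (Fintype.card m), ε k * ‖(M * N ^ k) *ᵥ η‖ ^ 2 := by
  obtain ⟨k, hk, hne⟩ : ∃ k < Fintype.card m, (M * N ^ k) *ᵥ η ≠ 0 := by
    by_contra! hzero
    exact hη (h.eq_zero_of_forall_mulVec_eq_zero hzero)
  refine Finset.sum_pos' (fun i hi => ?_) ⟨k, Finset.mem_range.mpr hk, ?_⟩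
  · exact mul_nonneg (hε i (Finset.mem_range.mp hi)).le (sq_nonneg _)
  · exact mul_pos (hε k hk) (pow_pos (norm_pos_iff.mpr hne) 2)

end SKCondition

section Continuity

variable {X R l m : Type*} [TopologicalSpace X] [Fintype m] {s : Set X}

theorem continuousOn_matrix_mulVec [NonUnitalNonAssocSemiring R] [TopologicalSpace R]
    [ContinuousAdd R] [ContinuousMul R] {A : X → Matrix l m R} {v : X → m → R}
    (hA : ContinuousOn A s) (hv : ContinuousOn v s) : ContinuousOn (fun x => A x *ᵥ v x) s :=
  continuousOn_iff_continuous_domRestrict.mpr (hA.domRestrict.matrix_mulVec hv.domRestrict)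

theorem continuousOn_sum_mul_norm_sq_mulVec [Fintype l] [DecidableEq m] [SeminormedRing R]
    {N : X → Matrix m m R} {M : X → Matrix l m R} {v : X → m → R} (hN : ContinuousOn N s)
    (hM : ContinuousOn M s) (hv : ContinuousOn v s) (ε : ℕ → ℝ) (t : Finset ℕ) :
    ContinuousOn (fun x => ∑ k ∈ t, ε k * ‖(M x * N x ^ k) *ᵥ v x‖ ^ 2) s := by
  refine continuousOn_finsetSum t fun k _ => continuousOn_const.mul (.pow (.norm ?_) 2)
  refine continuousOn_matrix_mulVec ?_ hv
  exact continuousOn_iff_continuous_domRestrict.mpr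
    (hM.domRestrict.matrix_mul (hN.pow k).domRestrict)

end Continuity

theorem uniform_lower_bound_of_SK_on_sphere_general {X m : Type*} [TopologicalSpace X] [Fintype m]
    [DecidableEq m] {s : Set X} (hs : IsCompact s) {N M : X → Matrix m m ℂ}
    (hN : ContinuousOn N s) (hM : ContinuousOn M s) (hSK : ∀ x ∈ s, SKCondition (N x) (M x))
    {ε : ℕ → ℝ} (hε : ∀ k < Fintype.card m, 0 < ε k) :
    ∃ c > 0, ∀ x ∈ s, ∀ η : EuclideanSpace ℂ m, ‖η‖ = 1 →
      c ≤ ∑ k ∈ Finset.range (Fintype.card m), ε k * ‖(M x * N x ^ k) *ᵥ η.ofLp‖ ^ 2 := by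
  have hcompact : IsCompact (s ×ˢ Metric.sphere (0 : EuclideanSpace ℂ m) 1) :=
    hs.prod (isCompact_sphere _ _)
  have hcont := continuousOn_sum_mul_norm_sq_mulVec
    (hN.comp continuousOn_fst (Set.mapsTo_fst_prod (t := Metric.sphere (0 : EuclideanSpace ℂ m) 1)))
    (hM.comp continuousOn_fst Set.mapsTo_fst_prod)
    ((PiLp.continuous_ofLp 2 _).comp_continuousOn continuousOn_snd)
    ε (Finset.range (Fintype.card m))
  obtain ⟨c, hc, hle⟩ := hcompact.exists_forall_le' hcont (a := 0) fun ⟨x, η⟩ ⟨hx, hη⟩ =>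
    (hSK x hx).sum_mul_norm_sq_pos hε
      ((WithLp.ofLp_eq_zero 2).not.mpr (ne_zero_of_mem_unit_sphere ⟨η, hη⟩))
  exact ⟨c, hc, fun x hx η hη => hle (x, η) ⟨hx, mem_sphere_zero_iff_norm.mpr hη⟩⟩

theorem uniform_lower_bound_of_SK_on_sphere (n d : ℕ) (hn : 1 ≤ n) (hd : 1 ≤ d)
    (N M : EuclideanSpace ℝ (Fin d) → Matrix (Fin n) (Fin n) ℂ)
    (hNcont : ContinuousOn N (Metric.sphere (0 : EuclideanSpace ℝ (Fin d)) 1))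
    (hMcont : ContinuousOn M (Metric.sphere (0 : EuclideanSpace ℝ (Fin d)) 1))
    (hSK : ∀ ω ∈ Metric.sphere (0 : EuclideanSpace ℝ (Fin d)) 1,
      SKCondition (N ω) (M ω)) :
    ∀ ε : ℕ → ℝ, (∀ k < n, 0 < ε k) →
      ∃ c > 0, ∀ ω ∈ Metric.sphere (0 : EuclideanSpace ℝ (Fin d)) 1,
        ∀ η : EuclideanSpace ℂ (Fin n), ‖η‖ = 1 →
          c ≤ ∑ k ∈ Finset.range n,
              ε k * ‖((M ω * N ω ^ k).mulVec η : Fin n → ℂ)‖ ^ 2 := by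
  intro ε hε
  simpa only [Fintype.card_fin] using uniform_lower_bound_of_SK_on_sphere_general
    (isCompact_sphere _ _) hNcont hMcont hSK (by rwa [Fintype.card_fin])
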